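/- arXiv:1801.03543 — 4 statements merged into one kernel-verified Lean document; each statement's English description precedes it below -/
import Mathlib

section
/- For every integer N ≥ 2 there exists a unique formal power series g ∈ ℂ[[t]] with constant coefficient 1 satisfying g(t·(1+N·t)⁻¹) = g(t)·(1−t²) in ℂ[[t]]. (Writing t = u⁻¹, this is the existence and uniqueness of the series g(u) ∈ 1 + u⁻¹ℂ[[u⁻¹]] satisfying the functional equation g(u+N) = g(u)(1−u⁻²) that normalizes the Yang R-matrix.) -/
/-- Composition `f ↦ f(a)` of a formal power series `f` with a power series `a`
(intended for `a` with zero constant coefficient), defined coefficientwise: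
the `m`-th coefficient of `f(a)` is `∑_{n ≤ m} fₙ · (coeff m of aⁿ)`.
When the constant coefficient of `a` vanishes, `coeff m (aⁿ) = 0` for `n > m`,
so this is the usual substitution `f(a) = ∑ₙ fₙ aⁿ`. -/
noncomputable def PowerSeries.substC (a f : PowerSeries ℂ) : PowerSeries ℂ :=
  PowerSeries.mk fun m =>
    ∑ n ∈ Finset.range (m + 1), PowerSeries.coeff n f * PowerSeries.coeff m (a ^ n)

/-!
Write `a = t(1+Nt)⁻¹ = t - Nt² + ⋯` and `h = 1 - t²`. The equation `g(a) = g h` is the linear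
system `∑ₙ gₙ (aⁿ - tⁿh) = 0`. Since `h` has constant term `1` and no linear term,
`aⁿ - tⁿh = -nN tⁿ⁺¹ + O(tⁿ⁺²)`: the coefficients of `t⁰` and `t¹` in the equation are vacuous,
and that of `tᵏ⁺²` determines `gₖ₊₁` from `g₀, …, gₖ`, because `(k+1)N ≠ 0`.
-/

section Triangular

open Finset

variable {K : Type*} [DivisionRing K]

/-- The sequence with initial term `c` obtained by solving, for `k = 0, 1, …`, the triangular
linear equation `∑ n ≤ k + 1, f n * A k n = 0` for its last unknown `f (k + 1)`.
It is meant for nonzero pivots `A k (k + 1)`; a zero pivot gives the junk value `f (k + 1) = 0`. -/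
def triangularSolution (A : ℕ → ℕ → K) (c : K) : ℕ → K
  | 0 => c
  | k + 1 => -(∑ n : Fin (k + 1), triangularSolution A c n * A k n) / A k (k + 1)

theorem triangularSolution_succ (A : ℕ → ℕ → K) (c : K) (k : ℕ) :
    triangularSolution A c (k + 1) =
      -(∑ n ∈ range (k + 1), triangularSolution A c n * A k n) / A k (k + 1) := by
  rw [triangularSolution, Fin.sum_univ_eq_sum_range fun n => triangularSolution A c n * A k n]

theorem existsUnique_sum_range_mul_eq_zero {A : ℕ → ℕ → K} (hA : ∀ k, A k (k + 1) ≠ 0) (c : K) :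
    ∃! f : ℕ → K, f 0 = c ∧ ∀ k, ∑ n ∈ range (k + 2), f n * A k n = 0 := by
  have solve_last (f : ℕ → K) (k : ℕ) : ∑ n ∈ range (k + 2), f n * A k n = 0 ↔
      f (k + 1) = -(∑ n ∈ range (k + 1), f n * A k n) / A k (k + 1) := by
    rw [sum_range_succ, eq_div_iff (hA k), add_eq_zero_iff_neg_eq, eq_comm]
  simp only [solve_last]
  refine ⟨triangularSolution A c, ⟨by rw [triangularSolution], triangularSolution_succ A c⟩, ?_⟩
  rintro f ⟨hf_zero, hf_succ⟩
  funext m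
  induction m using Nat.strong_induction_on with
  | _ m ih =>
    cases m with
    | zero => rw [hf_zero, triangularSolution]
    | succ k =>
      rw [hf_succ, triangularSolution_succ,
        sum_congr rfl fun n hn => by rw [ih n (mem_range.mp hn)]]

end Triangular

section PowerSeries

open Finset PowerSeries

section CommSemiring

variable {R : Type*} [CommSemiring R] {a : R⟦X⟧}

theorem coeff_pow_of_lt (ha : constantCoeff a = 0) {m n : ℕ} (hmn : m < n) :
    coeff m (a ^ n) = 0 :=
  X_pow_dvd_iff.mp (pow_dvd_pow_of_dvd (X_dvd_iff.mpr ha) n) m hmn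

theorem coeff_pow_self (ha : constantCoeff a = 0) (n : ℕ) :
    coeff n (a ^ n) = coeff 1 a ^ n := by
  obtain ⟨b, rfl⟩ := X_dvd_iff.mpr ha
  simpa [mul_pow, coeff_succ_X_mul] using coeff_X_pow_mul (b ^ n) n 0

theorem coeff_succ_pow_self (ha : constantCoeff a = 0) (n : ℕ) :
    coeff (n + 1) (a ^ n) = n * coeff 2 a * coeff 1 a ^ (n - 1) := by
  obtain ⟨b, rfl⟩ := X_dvd_iff.mpr ha
  rw [mul_pow, add_comm n 1, coeff_X_pow_mul, coeff_one_pow, coeff_succ_X_mul, coeff_succ_X_mul,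
    coeff_zero_eq_constantCoeff_apply]

theorem coeff_mul_eq_sum_range (f h : R⟦X⟧) (m : ℕ) :
    coeff m (f * h) = ∑ n ∈ range (m + 1), coeff n f * coeff m (X ^ n * h) := by
  rw [coeff_mul, Nat.sum_antidiagonal_eq_sum_range_succ fun i j => coeff i f * coeff j h]
  refine sum_congr rfl fun n hn => ?_
  rw [coeff_X_pow_mul', if_pos (mem_range_succ_iff.mp hn)]

end CommSemiring

section CommRing

variable {R : Type*} [CommRing R] {a h : R⟦X⟧}

theorem coeff_subst_eq_sum_range (ha : constantCoeff a = 0) (f : R⟦X⟧) (m : ℕ) :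
    coeff m (f.subst a) = ∑ n ∈ range (m + 1), coeff n f * coeff m (a ^ n) := by
  rw [coeff_subst' (.of_constantCoeff_zero' ha)]
  refine finsum_eq_sum_of_support_subset _ fun n hn => ?_
  rw [coe_range, Set.mem_Iio, Nat.lt_succ_iff]
  by_contra! hmn
  exact hn (by simp only [coeff_pow_of_lt ha hmn, smul_zero])

theorem coeff_subst_sub_mul (ha : constantCoeff a = 0) (g h : R⟦X⟧) (m : ℕ) :
    coeff m (g.subst a - g * h) =
      ∑ n ∈ range (m + 1), coeff n g * coeff m (a ^ n - X ^ n * h) := by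
  rw [map_sub, coeff_subst_eq_sum_range ha, coeff_mul_eq_sum_range, ← sum_sub_distrib]
  simp only [map_sub, mul_sub]

theorem coeff_pow_sub_X_pow_mul_self (ha₀ : constantCoeff a = 0) (ha₁ : coeff 1 a = 1)
    (hh₀ : constantCoeff h = 1) (n : ℕ) : coeff n (a ^ n - X ^ n * h) = 0 := by
  rw [map_sub, coeff_pow_self ha₀, ha₁, one_pow, coeff_X_pow_mul', if_pos le_rfl, Nat.sub_self,
    coeff_zero_eq_constantCoeff_apply, hh₀, sub_self]

theorem coeff_succ_pow_sub_X_pow_mul_self (ha₀ : constantCoeff a = 0) (ha₁ : coeff 1 a = 1)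
    (hh₁ : coeff 1 h = 0) (n : ℕ) : coeff (n + 1) (a ^ n - X ^ n * h) = n * coeff 2 a := by
  rw [map_sub, coeff_succ_pow_self ha₀, ha₁, one_pow, mul_one, add_comm n 1, coeff_X_pow_mul,
    hh₁, sub_zero]

theorem subst_eq_mul_iff (ha₀ : constantCoeff a = 0) (ha₁ : coeff 1 a = 1)
    (hh₀ : constantCoeff h = 1) (hh₁ : coeff 1 h = 0) (g : R⟦X⟧) :
    g.subst a = g * h ↔
      ∀ k, ∑ n ∈ range (k + 2), coeff n g * coeff (k + 2) (a ^ n - X ^ n * h) = 0 := by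
  have coeff_eq (m : ℕ) : coeff m (g.subst a - g * h) =
      ∑ n ∈ range m, coeff n g * coeff m (a ^ n - X ^ n * h) := by
    rw [coeff_subst_sub_mul ha₀, sum_range_succ, coeff_pow_sub_X_pow_mul_self ha₀ ha₁ hh₀,
      mul_zero, add_zero]
  have coeff_one_eq_zero : coeff 1 (g.subst a - g * h) = 0 := by
    rw [coeff_eq, sum_range_one, coeff_succ_pow_sub_X_pow_mul_self ha₀ ha₁ hh₁, Nat.cast_zero,
      zero_mul, mul_zero]
  rw [← sub_eq_zero]
  constructor
  · intro hg k
    rw [← coeff_eq, hg, map_zero]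
  · intro hg
    ext m
    match m with
    | 0 => rw [coeff_eq, sum_range_zero, map_zero]
    | 1 => rw [coeff_one_eq_zero, map_zero]
    | k + 2 => rw [coeff_eq, hg, map_zero]

end CommRing

theorem substC_eq_subst {a : ℂ⟦X⟧} (ha : constantCoeff a = 0) (f : ℂ⟦X⟧) :
    substC a f = f.subst a := by
  ext m
  rw [substC, coeff_mk, coeff_subst_eq_sum_range ha]

section Field

variable {K : Type*} [Field K]

theorem existsUnique_subst_eq_mul [CharZero K] {a h : K⟦X⟧} (ha₀ : constantCoeff a = 0)
    (ha₁ : coeff 1 a = 1) (ha₂ : coeff 2 a ≠ 0) (hh₀ : constantCoeff h = 1)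
    (hh₁ : coeff 1 h = 0) (c : K) :
    ∃! g : K⟦X⟧, constantCoeff g = c ∧ g.subst a = g * h := by
  have diagonal_ne_zero (k : ℕ) :
      coeff (k + 2) (a ^ (k + 1) - X ^ (k + 1) * h) ≠ 0 := by
    rw [coeff_succ_pow_sub_X_pow_mul_self ha₀ ha₁ hh₁]
    exact mul_ne_zero (Nat.cast_ne_zero.mpr k.succ_ne_zero) ha₂
  obtain ⟨f, ⟨hf_zero, hf_sum⟩, hf_unique⟩ :=
    existsUnique_sum_range_mul_eq_zero
      (A := fun k n => coeff (k + 2) (a ^ n - X ^ n * h)) diagonal_ne_zero c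
  simp only [subst_eq_mul_iff ha₀ ha₁ hh₀ hh₁]
  refine ⟨mk f, ⟨?_, fun k => ?_⟩, ?_⟩
  · rw [← coeff_zero_eq_constantCoeff_apply, coeff_mk, hf_zero]
  · simpa only [coeff_mk] using hf_sum k
  · rintro g ⟨hg_zero, hg_sum⟩
    ext m
    rw [coeff_mk, ← hf_unique (fun n => coeff n g)
      ⟨(coeff_zero_eq_constantCoeff_apply g).trans hg_zero, hg_sum⟩]

theorem inv_one_add_smul_X (c : K) : (1 + c • X : K⟦X⟧)⁻¹ = mk fun n => (-c) ^ n := by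
  rw [PowerSeries.inv_eq_iff_mul_eq_one (by simp)]
  ext m
  cases m with
  | zero => simp
  | succ m =>
    rw [mul_add, mul_one, mul_smul_comm, map_add, coeff_smul, coeff_succ_mul_X, coeff_mk, coeff_mk,
      coeff_one, if_neg m.succ_ne_zero, smul_eq_mul]
    ring

theorem statement0_general [CharZero K] {c : K} (hc : c ≠ 0) :
    ∃! g : K⟦X⟧, constantCoeff g = 1 ∧
      g.subst (X * (1 + c • X)⁻¹ : K⟦X⟧) = g * (1 - X ^ 2) := by
  refine existsUnique_subst_eq_mul ?_ ?_ ?_ ?_ ?_ 1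
  · simp
  · simp [inv_one_add_smul_X, coeff_succ_X_mul]
  · simpa [inv_one_add_smul_X, coeff_succ_X_mul] using hc
  · simp
  · simp [coeff_one, coeff_X_pow]

end Field

end PowerSeries

/-- For every integer `N ≥ 2` there is a unique formal power series `g ∈ ℂ[[t]]`
with constant coefficient `1` satisfying `g(t·(1+N·t)⁻¹) = g(t)·(1−t²)`
(the functional equation `g(u+N) = g(u)(1−u⁻²)` in the variable `t = u⁻¹`). -/
theorem statement0 (N : ℕ) (hN : 2 ≤ N) :
    ∃! g : PowerSeries ℂ,
      PowerSeries.constantCoeff g = 1 ∧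
      PowerSeries.substC
        (PowerSeries.X * (1 + (N : ℂ) • PowerSeries.X)⁻¹) g
        = g * (1 - PowerSeries.X ^ 2) := by
  simpa only [substC_eq_subst (a := PowerSeries.X * (1 + (N : ℂ) • PowerSeries.X)⁻¹) (by simp)]
    using statement0_general (c := (N : ℂ)) (Nat.cast_ne_zero.mpr (by omega))
end

section
/- (Fusion procedure.) Let n ≥ 1. In the group algebra ℚ[Sₙ] of the symmetric group Sₙ, the ordered product ∏_{i=1}^{n−1} ∏_{j=i+1}^{n} ( 1 − (j−i)⁻¹·(i j) ), with factors multiplied from left to right first by increasing i and, for each fixed i, by increasing j, equals Σ_{s ∈ Sₙ} sgn(s)·s, i.e. n! times the antisymmetrizer a^{(n)} = (1/n!)·Σ_{s ∈ Sₙ} sgn(s)·s. Here (i j) denotes the transposition of i and j. -/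
/-- The factor `1 − (j−i)⁻¹·(i j)` in the group algebra `ℚ[Sₙ]`. -/
noncomputable def fusionFactor (n : ℕ) (i j : Fin n) :
    MonoidAlgebra ℚ (Equiv.Perm (Fin n)) :=
  1 - (((j.val - i.val : ℕ) : ℚ))⁻¹ •
    MonoidAlgebra.of ℚ (Equiv.Perm (Fin n)) (Equiv.swap i j)

/-!
Induct on `n`, letting `Sₙ` act on the nonzero indices of `Sₙ₊₁`. The rows `i ≥ 1` of the
product for `n + 1` form the product for `n`, which is the signed sum `A` of the elements of
`Sₙ`. It remains to multiply `A` on the left by the row `i = 0`. Since `(0 i)(0 j) = (0 j)(i j)`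
and `(i j) A = -A`, the vector `(0 j) A` is an eigenvector of `(0 i)` with eigenvalue `-1`
whenever `0 < i < j`. Therefore the factors to the left of `1 - j⁻¹ (0 j)` scale `(0 j) A` by
`∏_{0 < i < j} (1 + i⁻¹) = j`, and the row sends `A` to `A - ∑ⱼ (0 j) A`, which is the signed
sum of the elements of `Sₙ₊₁` arranged by left cosets of `Sₙ`.
-/

open Equiv
open scoped Nat

section OrderedProduct

variable {K A : Type*} [Field K] [Ring A] [Algebra K A]

theorem prod_one_sub_inv_smul_mul_of_mul_eq_neg {m : ℕ} (hm : (m ! : K) ≠ 0) {x : Fin m → A}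
    {y : A} (hxy : ∀ i, x i * y = -y) :
    (List.ofFn fun i : Fin m => 1 - ((i + 1 : ℕ) : K)⁻¹ • x i).prod * y
      = ((m + 1 : ℕ) : K) • y := by
  induction m with
  | zero => simp
  | succ m ih =>
    obtain ⟨hm₁, hm₀⟩ : ((m + 1 : ℕ) : K) ≠ 0 ∧ (m ! : K) ≠ 0 := by
      simpa only [Nat.factorial_succ, Nat.cast_mul, mul_ne_zero_iff] using hm
    have last_factor : (1 - ((m + 1 : ℕ) : K)⁻¹ • x (Fin.last m)) * y
        = (1 + ((m + 1 : ℕ) : K)⁻¹) • y := by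
      rw [sub_mul, one_mul, smul_mul_assoc, hxy, smul_neg, sub_neg_eq_add, add_smul, one_smul]
    have init_factors := ih hm₀ fun i => hxy i.castSucc
    simp only [List.ofFn_succ', List.prod_concat, Fin.val_castSucc, Fin.val_last]
    rw [mul_assoc, last_factor, mul_smul_comm, init_factors, smul_smul, add_mul, one_mul,
      inv_mul_cancel₀ hm₁, ← Nat.cast_add_one]

theorem prod_one_sub_inv_smul_mul_of_lt {m : ℕ} (hm : (m ! : K) ≠ 0) {x : Fin m → A} {a : A}
    (hxa : ∀ i j, i < j → x i * (x j * a) = -(x j * a)) :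
    (List.ofFn fun i : Fin m => 1 - ((i + 1 : ℕ) : K)⁻¹ • x i).prod * a = a - ∑ i, x i * a := by
  induction m with
  | zero => simp
  | succ m ih =>
    obtain ⟨hm₁, hm₀⟩ : ((m + 1 : ℕ) : K) ≠ 0 ∧ (m ! : K) ≠ 0 := by
      simpa only [Nat.factorial_succ, Nat.cast_mul, mul_ne_zero_iff] using hm
    have init_mul := ih hm₀ fun i j hij => hxa i.castSucc j.castSucc hij
    have init_mul_last := prod_one_sub_inv_smul_mul_of_mul_eq_neg hm₀
      fun i => hxa i.castSucc (Fin.last m) (Fin.castSucc_lt_last i)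
    simp only [List.ofFn_succ', List.prod_concat, Fin.val_castSucc, Fin.val_last]
    rw [mul_assoc, sub_mul, one_mul, smul_mul_assoc, mul_sub, mul_smul_comm, init_mul,
      init_mul_last, inv_smul_smul₀ hm₁, Fin.sum_univ_castSucc, sub_sub]

end OrderedProduct

section Perm

variable {α β : Type*} [DecidableEq α] [DecidableEq β]

theorem viaEmbedding_swap (ι : α ↪ β) (i j : α) :
    (swap i j).viaEmbedding ι = swap (ι i) (ι j) := by
  ext b
  by_cases hb : b ∈ Set.range ι
  · obtain ⟨a, rfl⟩ := hb
    rw [Perm.viaEmbedding_apply, ι.injective.swap_apply]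
  · rw [Perm.viaEmbedding_apply_of_notMem _ _ _ hb, swap_apply_of_ne_of_ne]
    · exact fun h => hb ⟨i, h.symm⟩
    · exact fun h => hb ⟨j, h.symm⟩

theorem swap_mul_swap_eq_swap_mul_swap {a b c : α} (hab : a ≠ b) (hbc : b ≠ c) :
    swap a b * swap a c = swap a c * swap b c := by
  rw [mul_swap_eq_swap_mul (swap a c), swap_apply_right, swap_apply_of_ne_of_ne hab.symm hbc,
    swap_comm b a]

theorem decomposeFin_symm_eq_swap_mul_viaEmbedding {n : ℕ} (p : Fin (n + 1)) (e : Perm (Fin n)) :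
    Perm.decomposeFin.symm (p, e) = swap 0 p * e.viaEmbedding (Fin.succEmb n) := by
  ext k
  cases k using Fin.cases with
  | zero => rw [Perm.mul_apply, Perm.viaEmbedding_apply_of_notMem _ _ _ (by simp)]; simp
  | succ k =>
    rw [Perm.decomposeFin_symm_apply_succ, Perm.mul_apply, ← Fin.coe_succEmb,
      Perm.viaEmbedding_apply]

end Perm

section SignSum

/-- The sum `∑ sgn(s) s` over all permutations of `α`, i.e. the antisymmetrizer of the group algebra
without its normalization by `1 / |α|!`, so that it exists in every characteristic. -/
noncomputable def signSum (R α : Type*) [CommRing R] [Fintype α] [DecidableEq α] :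
    MonoidAlgebra R (Perm α) :=
  ∑ s : Perm α, ((Perm.sign s : ℤ) : R) • MonoidAlgebra.of R (Perm α) s

theorem of_swap_mul_signSum {R α : Type*} [CommRing R] [Fintype α] [DecidableEq α] {i j : α}
    (hij : i ≠ j) :
    MonoidAlgebra.of R (Perm α) (swap i j) * signSum R α = -signSum R α := by
  rw [signSum, Finset.mul_sum, ← Finset.sum_neg_distrib]
  refine Fintype.sum_equiv (Equiv.mulLeft (swap i j)) _ _ fun s => ?_
  rw [coe_mulLeft, Perm.sign_mul, Perm.sign_swap hij, map_mul, mul_smul_comm]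
  simp

/-- The map of group algebras induced by the embedding of `Sₙ` into `Sₙ₊₁` that relabels `i` as
`i + 1` and fixes `0`. -/
noncomputable def shiftAlgHom (R : Type*) [CommRing R] (n : ℕ) :
    MonoidAlgebra R (Perm (Fin n)) →ₐ[R] MonoidAlgebra R (Perm (Fin (n + 1))) :=
  MonoidAlgebra.mapDomainAlgHom R R (Perm.viaEmbeddingHom (Fin.succEmb n))

variable {R : Type*} [CommRing R] {n : ℕ}

theorem shiftAlgHom_of (e : Perm (Fin n)) :
    shiftAlgHom R n (MonoidAlgebra.of R _ e)
      = MonoidAlgebra.of R _ (e.viaEmbedding (Fin.succEmb n)) := by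
  simp [shiftAlgHom, Perm.viaEmbeddingHom_apply]

theorem signSum_fin_succ :
    signSum R (Fin (n + 1)) = shiftAlgHom R n (signSum R (Fin n)) - ∑ i : Fin n,
      MonoidAlgebra.of R _ (swap 0 i.succ) * shiftAlgHom R n (signSum R (Fin n)) := by
  have coset_sum (p : Fin (n + 1)) :
      ∑ e : Perm (Fin n), ((Perm.sign (Perm.decomposeFin.symm (p, e)) : ℤ) : R) •
          MonoidAlgebra.of R _ (Perm.decomposeFin.symm (p, e))
        = (if p = 0 then (1 : R) else -1) •
          (MonoidAlgebra.of R _ (swap 0 p) * shiftAlgHom R n (signSum R (Fin n))) := by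
    rw [signSum, map_sum, Finset.mul_sum, Finset.smul_sum]
    refine Finset.sum_congr rfl fun e _ => ?_
    rw [Perm.decomposeFin.symm_sign, decomposeFin_symm_eq_swap_mul_viaEmbedding, map_mul, map_smul,
      shiftAlgHom_of, mul_smul_comm, smul_smul]
    congr 1
    split_ifs <;> simp
  rw [signSum, ← Perm.decomposeFin.symm.sum_comp, Fintype.sum_prod_type]
  simp only [coset_sum, Fin.sum_univ_succ, Fin.succ_ne_zero, if_true, if_false, swap_self,
    neg_smul, one_smul, Finset.sum_neg_distrib, ← sub_eq_add_neg]
  rw [← Perm.one_def, map_one, one_mul]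

theorem of_swap_mul_of_swap_mul_shiftAlgHom_signSum {i j : Fin n} (hij : i ≠ j) :
    MonoidAlgebra.of R _ (swap 0 i.succ) *
        (MonoidAlgebra.of R _ (swap 0 j.succ) * shiftAlgHom R n (signSum R (Fin n)))
      = -(MonoidAlgebra.of R _ (swap 0 j.succ) * shiftAlgHom R n (signSum R (Fin n))) := by
  have swap_succ : MonoidAlgebra.of R _ (swap i.succ j.succ)
      = shiftAlgHom R n (MonoidAlgebra.of R _ (swap i j)) := by
    rw [shiftAlgHom_of, viaEmbedding_swap, Fin.coe_succEmb]
  rw [← mul_assoc, ← map_mul,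
    swap_mul_swap_eq_swap_mul_swap (Fin.succ_ne_zero i).symm ((Fin.succ_injective n).ne hij),
    map_mul, mul_assoc, swap_succ, ← map_mul, of_swap_mul_signSum hij, map_neg, mul_neg]

end SignSum

section FusionRow

/-- The factor `1 − (j−i)⁻¹·(i j)` over an arbitrary field; it is used only for `i < j`, where the
truncated subtraction is the true one. -/
noncomputable def fusionFactorOver (K : Type*) [Field K] {n : ℕ} (i j : Fin n) :
    MonoidAlgebra K (Perm (Fin n)) :=
  1 - ((j.val - i.val : ℕ) : K)⁻¹ • MonoidAlgebra.of K (Perm (Fin n)) (swap i j)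

/-- The `i`-th row of the fusion product: the factors of index `(i, j)` with `i < j`, multiplied
from left to right by increasing `j`. -/
noncomputable def fusionRow (K : Type*) [Field K] {n : ℕ} (i : Fin n) :
    MonoidAlgebra K (Perm (Fin n)) :=
  (((List.finRange n).filter fun j => decide (i < j)).map (fusionFactorOver K i)).prod

variable {K : Type*} [Field K] {n : ℕ}

theorem fusionFactorOver_succ_succ (i j : Fin n) :
    fusionFactorOver K i.succ j.succ = shiftAlgHom K n (fusionFactorOver K i j) := by
  simp only [fusionFactorOver, map_sub, map_one, map_smul, shiftAlgHom_of, viaEmbedding_swap,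
    Fin.coe_succEmb, Fin.val_succ, Nat.add_sub_add_right]

theorem fusionRow_succ (i : Fin n) :
    fusionRow K i.succ = shiftAlgHom K n (fusionRow K i) := by
  rw [fusionRow, fusionRow, List.finRange_succ, List.filter_cons_of_neg (by simp), List.filter_map,
    List.map_map, map_list_prod, List.map_map]
  simp only [Function.comp_def, Fin.succ_lt_succ_iff, fusionFactorOver_succ_succ]

theorem fusionRow_zero :
    fusionRow K (0 : Fin (n + 1)) = (List.ofFn fun i : Fin n =>
      1 - ((i + 1 : ℕ) : K)⁻¹ • MonoidAlgebra.of K _ (swap 0 i.succ)).prod := by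
  rw [fusionRow, List.finRange_succ, List.filter_cons_of_neg (by simp), List.filter_map,
    List.map_map, List.ofFn_eq_map]
  simp [Function.comp_def, fusionFactorOver]

theorem prod_fusionRow_succ :
    ((List.finRange (n + 1)).map (fusionRow K)).prod
      = fusionRow K 0 * shiftAlgHom K n ((List.finRange n).map (fusionRow K)).prod := by
  rw [List.finRange_succ, List.map_cons, List.prod_cons, List.map_map, map_list_prod, List.map_map]
  simp only [Function.comp_def, fusionRow_succ]

theorem fusionRow_zero_mul_shiftAlgHom_signSum (hn : (n ! : K) ≠ 0) :
    fusionRow K 0 * shiftAlgHom K n (signSum K (Fin n)) = signSum K (Fin (n + 1)) := by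
  rw [fusionRow_zero, signSum_fin_succ]
  exact prod_one_sub_inv_smul_mul_of_lt hn
    fun i j hij => of_swap_mul_of_swap_mul_shiftAlgHom_signSum hij.ne

end FusionRow

theorem statement5_general (K : Type*) [Field K] (n : ℕ) (hn : ((n - 1)! : K) ≠ 0) :
    ((List.finRange n).map (fusionRow K)).prod = signSum K (Fin n) := by
  induction n with
  | zero => simp [signSum, MonoidAlgebra.one_def]
  | succ n ih =>
    have hn' : ((n - 1)! : K) ≠ 0 :=
      ne_zero_of_dvd_ne_zero hn (Nat.cast_dvd_cast (Nat.factorial_dvd_factorial (n.sub_le 1)))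
    rw [Nat.add_sub_cancel] at hn
    rw [prod_fusionRow_succ, ih hn', fusionRow_zero_mul_shiftAlgHom_signSum hn]

/-- Fusion procedure: in `ℚ[Sₙ]`, the ordered product
`∏_{i=1}^{n−1} ∏_{j=i+1}^{n} (1 − (j−i)⁻¹·(i j))`, with factors multiplied from left to
right first by increasing `i` and, for each fixed `i`, by increasing `j`, equals
`Σ_{s ∈ Sₙ} sgn(s)·s = n!·a^{(n)}`, where `a^{(n)}` is the antisymmetrizer. -/
theorem statement5 (n : ℕ) (hn : 1 ≤ n) :
    ((List.finRange n).map fun i =>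
        ((((List.finRange n).filter fun j => decide (i < j)).map
          (fusionFactor n i)).prod)).prod
      = ∑ s : Equiv.Perm (Fin n),
          ((Equiv.Perm.sign s : ℤ) : ℚ) • MonoidAlgebra.of ℚ (Equiv.Perm (Fin n)) s :=
  statement5_general ℚ n (Nat.cast_ne_zero.mpr (n - 1).factorial_ne_zero)
end

section
/- Let N ≥ 2 and n ≥ 1 be integers. Consider operators on (ℂ^N)^{⊗(n+1)} with tensor factors labeled 0, 1, …, n, with entries in the field ℂ(h,z) of rational functions. Let A^{(n)} = (1/n!)·Σ_{s ∈ Sₙ} sgn(s)·ρ(s), where ρ(s) permutes the tensor factors 1, …, n according to s and fixes factor 0. Then A^{(n)} · R_{0n}(z+(n−1)h) · R_{0,n−1}(z+(n−2)h) ⋯ R_{01}(z) = R_{01}(z) · R_{02}(z+h) ⋯ R_{0n}(z+(n−1)h) · A^{(n)}, where R_{0j}(x) = 1 − h·x⁻¹·P_{0j} and P_{0j} is the permutation operator exchanging factors 0 and j. (This is the rational form of the lemma stating that the antisymmetrizer A^{(n)} reverses the order of the string of R-matrices R̄^{12}_{1n}(u₀ | u_{[n]}) at the consecutive points u_{[n]}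 = (u, u−h, …, u−(n−1)h), the scalar normalizing factors being the same on both sides.) -/
/- Operators on `(ℂ^N)^{⊗(n+1)}` with tensor factors labeled `0, 1, …, n` (factor `0` is
the first component, factors `1, …, n` are indexed by `Fin n`), with entries in the field
`ℂ(h,z)` of rational functions, realized as `FractionRing (MvPolynomial (Fin 2) ℂ)` with
`h = X 0` and `z = X 1`. -/

/-- The action `ρ(s)` of a permutation `s ∈ Sₙ` permuting the tensor factors `1, …, n`
and fixing factor `0`. -/
noncomputable def rho (N n : ℕ) (s : Equiv.Perm (Fin n)) :
    Matrix (Fin N × (Fin n → Fin N)) (Fin N × (Fin n → Fin N))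
      (FractionRing (MvPolynomial (Fin 2) ℂ)) :=
  Matrix.of fun p q => if p.1 = q.1 ∧ ∀ k, p.2 k = q.2 (s k) then 1 else 0

/-- The antisymmetrizer `A^{(n)} = (1/n!)·Σ_{s ∈ Sₙ} sgn(s)·ρ(s)` acting on the tensor
factors `1, …, n`. -/
noncomputable def antisym (N n : ℕ) :
    Matrix (Fin N × (Fin n → Fin N)) (Fin N × (Fin n → Fin N))
      (FractionRing (MvPolynomial (Fin 2) ℂ)) :=
  ((n.factorial : FractionRing (MvPolynomial (Fin 2) ℂ)))⁻¹ •
    ∑ s : Equiv.Perm (Fin n),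
      (((Equiv.Perm.sign s : ℤ) : FractionRing (MvPolynomial (Fin 2) ℂ))) • rho N n s

/-- The permutation operator `P_{0j}` exchanging factor `0` and factor `j`
(for `j : Fin n` labeling the factor `j+1` in the paper's numbering `1, …, n`). -/
noncomputable def P0 (N n : ℕ) (j : Fin n) :
    Matrix (Fin N × (Fin n → Fin N)) (Fin N × (Fin n → Fin N))
      (FractionRing (MvPolynomial (Fin 2) ℂ)) :=
  Matrix.of fun p q =>
    if p.1 = q.2 j ∧ p.2 j = q.1 ∧ ∀ k, k ≠ j → p.2 k = q.2 k then 1 else 0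

/-- The Yang R-matrix `R_{0,j+1}(z + j·h) = 1 − h·(z + j·h)⁻¹·P_{0,j+1}` acting on
factors `0` and `j+1`, where `h = X 0` and `z = X 1` in `ℂ(h,z)`. -/
noncomputable def R0 (N n : ℕ) (j : Fin n) :
    Matrix (Fin N × (Fin n → Fin N)) (Fin N × (Fin n → Fin N))
      (FractionRing (MvPolynomial (Fin 2) ℂ)) :=
  1 - (algebraMap (MvPolynomial (Fin 2) ℂ) _ (MvPolynomial.X 0) *
        (algebraMap (MvPolynomial (Fin 2) ℂ) _ (MvPolynomial.X 1) +
          ((j : ℕ) : FractionRing (MvPolynomial (Fin 2) ℂ)) *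
            algebraMap (MvPolynomial (Fin 2) ℂ) _ (MvPolynomial.X 0))⁻¹) • P0 N n j

/-! All operators live in the image of the group algebra of the permutations of `{0, 1, …, n}`.
There `(0 j)(0 k) = (j k)(0 j)`, and `A` absorbs `(j k)` at the cost of a sign, so that
`A (0 j)(0 k) = -A (0 j)`. Hence multiplying out `A R_{0n}(z + (n-1)h) ⋯ R_{01}(z)` never produces a
word with more than one transposition, and the coefficients telescope because
`w⁻¹ - h w⁻¹ (w + h)⁻¹ = (w + h)⁻¹`: the product equals `A - h z⁻¹ A J` with `J = ∑ⱼ (0 j)`.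
Symmetrically the right-hand side equals `A - h z⁻¹ J A`, and `J` commutes with `A`. -/

open Equiv

section Fusion

variable {K M : Type*} [Field K] [Ring M] [Algebra K M]

/-- The Yang R-operator `1 - h u⁻¹ p` with spectral parameter `u`, where an arbitrary element `p` of
a `K`-algebra takes the place of the permutation operator. -/
def yangOperator (h u : K) (p : M) : M :=
  1 - (h * u⁻¹) • p

theorem yangOperator_op (h u : K) (p : M) :
    yangOperator h u (MulOpposite.op p) = MulOpposite.op (yangOperator h u p) := by
  simp only [yangOperator, MulOpposite.op_sub, MulOpposite.op_one, MulOpposite.op_smul]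

theorem sub_smul_mul_yangOperator {h w : K} (hw : w ≠ 0) (hwh : w + h ≠ 0) (a x p : M)
    (hxp : x * p = -x) :
    (a - (h * (w + h)⁻¹) • x) * yangOperator h w p = a - (h * w⁻¹) • (a * p + x) := by
  have telescope : h * (w + h)⁻¹ * (1 + h * w⁻¹) = h * w⁻¹ := by field_simp
  calc (a - (h * (w + h)⁻¹) • x) * yangOperator h w p
      = a - (h * w⁻¹) • (a * p) - (h * (w + h)⁻¹ * (1 + h * w⁻¹)) • x := by
        rw [yangOperator, mul_sub, mul_one, mul_smul_comm, sub_mul, smul_mul_assoc, hxp]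
        module
    _ = a - (h * w⁻¹) • (a * p + x) := by
        rw [telescope]
        module

theorem mul_prod_reverse_ofFn_yangOperator {n : ℕ} (h z : K) (hz : ∀ j : Fin n, z + j * h ≠ 0)
    (a : M) (P : Fin n → M) (hP : ∀ j k, k < j → a * P j * P k = -(a * P j)) :
    a * (List.ofFn fun j : Fin n => yangOperator h (z + j * h) (P j)).reverse.prod
      = a - (h * z⁻¹) • (a * ∑ j, P j) := by
  induction n generalizing z with
  | zero => simp
  | succ n ih =>
    have shift (j : Fin n) : z + (j.succ : ℕ) * h = (z + h) + j * h := by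
      push_cast [Fin.val_succ]
      ring
    have hz₀ : z ≠ 0 := by simpa using hz 0
    have tail := ih (z + h) (fun j => shift j ▸ hz j.succ) (fun j => P j.succ)
      (fun j k hkj => hP j.succ k.succ (Fin.succ_lt_succ_iff.mpr hkj))
    have absorb : a * (∑ j : Fin n, P j.succ) * P 0 = -(a * ∑ j : Fin n, P j.succ) := by
      simp only [Finset.mul_sum, Finset.sum_mul, hP _ 0 (Fin.succ_pos _), Finset.sum_neg_distrib]
    rw [List.ofFn_succ, List.reverse_cons, List.prod_append, List.prod_singleton, ← mul_assoc]
    simp only [shift, tail, Fin.val_zero, Nat.cast_zero, zero_mul, add_zero]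
    cases n with
    | zero => simp [yangOperator, mul_sub]
    | succ n =>
      have hzh : z + h ≠ 0 := by simpa using hz 1
      rw [sub_smul_mul_yangOperator hz₀ hzh _ _ _ absorb, ← mul_add, ← Fin.sum_univ_succ]

theorem prod_ofFn_yangOperator_mul {n : ℕ} (h z : K) (hz : ∀ j : Fin n, z + j * h ≠ 0)
    (a : M) (P : Fin n → M) (hP : ∀ j k, k < j → P k * (P j * a) = -(P j * a)) :
    (List.ofFn fun j : Fin n => yangOperator h (z + j * h) (P j)).prod * a
      = a - (h * z⁻¹) • ((∑ j, P j) * a) := by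
  apply MulOpposite.op_injective
  have opposite := mul_prod_reverse_ofFn_yangOperator h z hz (MulOpposite.op a)
    (fun j => MulOpposite.op (P j))
    fun j k hkj => by simpa using congrArg MulOpposite.op (hP j k hkj)
  simpa [yangOperator_op, MulOpposite.op_list_prod, List.map_ofFn, Function.comp_def] using opposite

end Fusion

section AlternatingSum

variable {ι M : Type*} [Fintype ι] [DecidableEq ι] [Ring M]

/-- The image of the unnormalised antisymmetrizer under a multiplicative map `ρ` from a symmetric
group to a ring. -/
def alternatingSum (ρ : Perm ι →* M) : M :=
  ∑ s, Perm.sign s • ρ s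

theorem map_mul_alternatingSum (ρ : Perm ι →* M) (t : Perm ι) :
    ρ t * alternatingSum ρ = Perm.sign t • alternatingSum ρ := by
  simp only [alternatingSum, Finset.mul_sum, Finset.smul_sum]
  refine Fintype.sum_equiv (Equiv.mulLeft t) _ _ fun s => ?_
  simp [smul_smul, mul_smul_comm, ← mul_assoc]

theorem alternatingSum_mul_map (ρ : Perm ι →* M) (t : Perm ι) :
    alternatingSum ρ * ρ t = Perm.sign t • alternatingSum ρ := by
  simp only [alternatingSum, Finset.sum_mul, Finset.smul_sum]
  refine Fintype.sum_equiv (Equiv.mulRight t) _ _ fun s => ?_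
  simp [smul_smul, smul_mul_assoc, mul_left_comm (Perm.sign t)]

end AlternatingSum

section PointedPermutations

/-- The embedding of the symmetric group on `1, …, n` as the stabiliser of `0` in the symmetric
group on `0, 1, …, n`. The label `0` is encoded as `none`. -/
def permOptionHom (ι : Type*) : Perm ι →* Perm (Option ι) where
  toFun := optionCongr
  map_one' := optionCongr_one
  map_mul' s t := optionCongr_trans t s

variable {ι M : Type*} [DecidableEq ι]

theorem permOptionHom_swap (j k : ι) : permOptionHom ι (swap j k) = swap (some j) (some k) :=
  optionCongr_swap j k

theorem swap_none_some_apply_some_of_ne {j k : ι} (hkj : k ≠ j) :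
    swap none (some j) (some k) = some k :=
  swap_apply_of_ne_of_ne (Option.some_ne_none k) ((Option.some_injective ι).ne hkj)

section Monoid

variable [Monoid M]

/-- The image of the transposition `(0 j)` under a multiplicative map `ρ` from the symmetric group
on `0, 1, …, n`, for instance the operator exchanging the factors `0` and `j` of a tensor power. -/
def pointSwap (ρ : Perm (Option ι) →* M) (j : ι) : M :=
  ρ (swap none (some j))

theorem map_permOptionHom_mul_pointSwap (ρ : Perm (Option ι) →* M) (s : Perm ι) (j : ι) :
    ρ (permOptionHom ι s) * pointSwap ρ j = pointSwap ρ (s j) * ρ (permOptionHom ι s) := by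
  rw [pointSwap, pointSwap, ← map_mul, ← map_mul, mul_swap_eq_swap_mul]
  rfl

theorem pointSwap_mul_pointSwap (ρ : Perm (Option ι) →* M) {j k : ι} (hjk : j ≠ k) :
    pointSwap ρ j * pointSwap ρ k = ρ (permOptionHom ι (swap j k)) * pointSwap ρ j := by
  rw [pointSwap, pointSwap, ← map_mul, ← map_mul, mul_swap_eq_swap_mul, swap_apply_left,
    swap_none_some_apply_some_of_ne hjk.symm, permOptionHom_swap]

end Monoid

variable [Ring M] [Fintype ι]

theorem alternatingSum_mul_pointSwap_mul_pointSwap (ρ : Perm (Option ι) →* M) {j k : ι}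
    (hjk : j ≠ k) :
    alternatingSum (ρ.comp (permOptionHom ι)) * pointSwap ρ j * pointSwap ρ k
      = -(alternatingSum (ρ.comp (permOptionHom ι)) * pointSwap ρ j) := by
  have absorb := alternatingSum_mul_map (ρ.comp (permOptionHom ι)) (swap j k)
  rw [MonoidHom.comp_apply] at absorb
  rw [mul_assoc, pointSwap_mul_pointSwap ρ hjk, ← mul_assoc, absorb, Perm.sign_swap hjk]
  simp

theorem pointSwap_mul_pointSwap_mul_alternatingSum (ρ : Perm (Option ι) →* M) {j k : ι}
    (hjk : j ≠ k) :
    pointSwap ρ k * (pointSwap ρ j * alternatingSum (ρ.comp (permOptionHom ι)))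
      = -(pointSwap ρ j * alternatingSum (ρ.comp (permOptionHom ι))) := by
  have absorb := map_mul_alternatingSum (ρ.comp (permOptionHom ι)) (swap k j)
  have move := map_permOptionHom_mul_pointSwap ρ (swap k j) k
  rw [MonoidHom.comp_apply] at absorb
  rw [swap_apply_left] at move
  rw [← mul_assoc, pointSwap_mul_pointSwap ρ hjk.symm, move, mul_assoc, absorb,
    Perm.sign_swap hjk.symm]
  simp

theorem commute_alternatingSum_sum_pointSwap (ρ : Perm (Option ι) →* M) :
    Commute (alternatingSum (ρ.comp (permOptionHom ι))) (∑ j, pointSwap ρ j) := by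
  refine Commute.sum_left _ _ _ fun s _ => Commute.smul_left ?_ _
  rw [MonoidHom.comp_apply, commute_iff_eq, Finset.mul_sum, Finset.sum_mul]
  exact Fintype.sum_equiv s _ _ fun j => map_permOptionHom_mul_pointSwap ρ s j

end PointedPermutations

theorem statement6_general {K M : Type*} [Field K] [Ring M] [Algebra K M] {n : ℕ}
    (ρ : Perm (Option (Fin n)) →* M) (h z : K) (hz : ∀ j : Fin n, z + j * h ≠ 0) :
    alternatingSum (ρ.comp (permOptionHom (Fin n))) *
        (List.ofFn fun j : Fin n => yangOperator h (z + j * h) (pointSwap ρ j)).reverse.prod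
      = (List.ofFn fun j : Fin n => yangOperator h (z + j * h) (pointSwap ρ j)).prod *
        alternatingSum (ρ.comp (permOptionHom (Fin n))) := by
  rw [mul_prod_reverse_ofFn_yangOperator h z hz _ _ fun j k hkj =>
      alternatingSum_mul_pointSwap_mul_pointSwap ρ hkj.ne',
    prod_ofFn_yangOperator_mul h z hz _ _ fun j k hkj =>
      pointSwap_mul_pointSwap_mul_alternatingSum ρ hkj.ne',
    (commute_alternatingSum_sum_pointSwap ρ).eq]

section TensorPower

/-- Separates the entry at `0`, encoded as `none`, of a multi-index with labels `0, 1, …, n`. -/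
def multiIndexEquivProd (d ι : Type*) : (Option ι → d) ≃ d × (ι → d) :=
  piOptionEquivProd

@[simp]
theorem multiIndexEquivProd_symm_none {d ι : Type*} (p : d × (ι → d)) :
    (multiIndexEquivProd d ι).symm p none = p.1 :=
  rfl

@[simp]
theorem multiIndexEquivProd_symm_some {d ι : Type*} (p : d × (ι → d)) (k : ι) :
    (multiIndexEquivProd d ι).symm p (some k) = p.2 k :=
  rfl

theorem multiIndex_comp_eq_iff {d ι : Type*} (σ : Option ι → Option ι) (p q : d × (ι → d)) :
    (multiIndexEquivProd d ι).symm p ∘ σ = (multiIndexEquivProd d ι).symm q ↔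
      (multiIndexEquivProd d ι).symm p (σ none) = q.1 ∧
        ∀ k, (multiIndexEquivProd d ι).symm p (σ (some k)) = q.2 k := by
  rw [funext_iff, Option.forall]
  rfl

variable (K d ι : Type*) [NonAssocSemiring K] [Fintype d] [DecidableEq d] [Fintype ι]
  [DecidableEq ι]

/-- The representation of the symmetric group on `0, 1, …, n` on a tensor power of a free module
with basis `d`. In the basis of multi-indices, `σ` sends the basis vector labeled `q` to the one
labeled `q ∘ σ⁻¹`. -/
def tensorPermHom : Perm (Option ι) →* Matrix (d × (ι → d)) (d × (ι → d)) K where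
  toFun σ := Matrix.permMatrixHom
    ((multiIndexEquivProd d ι).permCongr (σ.arrowCongr (Equiv.refl d)))
  map_one' := map_one _
  map_mul' σ τ := by
    rw [← map_mul, ← permCongr_mul]
    rfl

variable {K d ι}

theorem tensorPermHom_apply (σ : Perm (Option ι)) (p q : d × (ι → d)) :
    tensorPermHom K d ι σ p q =
      if (multiIndexEquivProd d ι).symm p ∘ σ = (multiIndexEquivProd d ι).symm q then 1 else 0 := by
  have inv_apply_iff :
      q ∈ some (multiIndexEquivProd d ι ((multiIndexEquivProd d ι).symm p ∘ σ)) ↔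
        (multiIndexEquivProd d ι).symm p ∘ σ = (multiIndexEquivProd d ι).symm q := by
    rw [Option.mem_some_iff, Equiv.eq_symm_apply]
  exact if_congr inv_apply_iff rfl rfl

end TensorPower

section RationalYangOperators

/-- The field `ℂ(h, z)`. -/
abbrev RationalFunctionField : Type :=
  FractionRing (MvPolynomial (Fin 2) ℂ)

/-- The variable `h` of `ℂ(h, z)`. -/
noncomputable abbrev hVar : RationalFunctionField :=
  algebraMap (MvPolynomial (Fin 2) ℂ) _ (MvPolynomial.X 0)

/-- The variable `z` of `ℂ(h, z)`. -/
noncomputable abbrev zVar : RationalFunctionField :=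
  algebraMap (MvPolynomial (Fin 2) ℂ) _ (MvPolynomial.X 1)

theorem zVar_add_natCast_mul_hVar_ne_zero (k : ℕ) : zVar + k * hVar ≠ 0 := by
  have polynomial_ne_zero :
      (MvPolynomial.X 1 + (k : MvPolynomial (Fin 2) ℂ) * MvPolynomial.X 0) ≠ 0 := fun h => by
    simpa using congrArg (MvPolynomial.eval ![0, 1]) h
  simpa only [map_add, map_mul, map_natCast] using
    (map_ne_zero_iff (algebraMap _ RationalFunctionField)
      (IsFractionRing.injective _ _)).mpr polynomial_ne_zero

variable (N n : ℕ)

-- The matrices `rho` satisfy `rho s * rho t = rho (t * s)`, hence the inverse.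
theorem rho_eq_tensorPermHom (s : Perm (Fin n)) :
    rho N n s = tensorPermHom _ (Fin N) (Fin n) (permOptionHom (Fin n) s⁻¹) := by
  ext p q
  rw [tensorPermHom_apply]
  refine if_congr ?_ rfl rfl
  rw [multiIndex_comp_eq_iff]
  exact and_congr Iff.rfl (s.forall_congr fun k => by simp [permOptionHom])

theorem antisym_eq_smul_alternatingSum :
    antisym N n = (n.factorial : RationalFunctionField)⁻¹ •
      alternatingSum ((tensorPermHom _ (Fin N) (Fin n)).comp (permOptionHom (Fin n))) := by
  rw [antisym, alternatingSum]
  congr 1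
  refine Fintype.sum_equiv (Equiv.inv _) _ _ fun s => ?_
  rw [rho_eq_tensorPermHom, Equiv.inv_apply, Perm.sign_inv, Int.cast_smul_eq_zsmul, Units.smul_def,
    MonoidHom.comp_apply]

theorem P0_eq_pointSwap (j : Fin n) :
    P0 N n j = pointSwap (tensorPermHom RationalFunctionField (Fin N) (Fin n)) j := by
  ext p q
  rw [pointSwap, tensorPermHom_apply]
  refine if_congr ?_ rfl rfl
  rw [multiIndex_comp_eq_iff, swap_apply_left, multiIndexEquivProd_symm_some, and_left_comm]
  refine and_congr_right fun _ => ?_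
  refine ⟨fun ⟨hj, hne⟩ k => ?_, fun h => ⟨?_, fun k hkj => ?_⟩⟩
  · obtain rfl | hkj := eq_or_ne k j
    · simpa using hj
    · simpa [swap_none_some_apply_some_of_ne hkj] using hne k hkj
  · simpa using h j
  · simpa [swap_none_some_apply_some_of_ne hkj] using h k

theorem R0_eq_yangOperator (j : Fin n) :
    R0 N n j = yangOperator hVar (zVar + (j : ℕ) * hVar)
      (pointSwap (tensorPermHom RationalFunctionField (Fin N) (Fin n)) j) := by
  rw [R0, P0_eq_pointSwap, yangOperator]

end RationalYangOperators

/-- The antisymmetrizer reverses the string of Yang R-matrices at consecutive points: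
`A^{(n)} · R_{0n}(z+(n−1)h) ⋯ R_{01}(z) = R_{01}(z) · R_{02}(z+h) ⋯ R_{0n}(z+(n−1)h) · A^{(n)}`. -/
theorem statement6 (N n : ℕ) (hN : 2 ≤ N) (hn : 1 ≤ n) :
    antisym N n * ((List.finRange n).reverse.map (R0 N n)).prod
      = ((List.finRange n).map (R0 N n)).prod * antisym N n := by
  have general := statement6_general (tensorPermHom RationalFunctionField (Fin N) (Fin n))
    hVar zVar fun j => zVar_add_natCast_mul_hVar_ne_zero j
  simp only [← R0_eq_yangOperator, List.ofFn_eq_map] at general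
  rw [antisym_eq_smul_alternatingSum, smul_mul_assoc, mul_smul_comm, List.map_reverse, general]
end

section
/- Let M be a module over the formal power series ring ℂ[[h]] and let J ⊆ M be a submodule such that for every x ∈ M, h·x ∈ J implies x ∈ J (equivalently, hⁿ·x ∈ J for some n ≥ 0 implies x ∈ J). Let J̄ = ⋂_{n≥0} (J + hⁿM) be the closure of J in the h-adic topology of M. Then J̄ has the same saturation property: for every x ∈ M and every k ≥ 1, if hᵏ·x ∈ J̄ then x ∈ J̄. -/
/-- The closure `J̄ = ⋂_{n≥0} (J + hⁿM)` of a submodule `J` in the `h`-adic topology of a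
`ℂ[[h]]`-module `M` (with `h = X`). -/
def adicClosure (M : Type*) [AddCommGroup M] [Module (PowerSeries ℂ) M]
    (J : Submodule (PowerSeries ℂ) M) : Set M :=
  ⋂ n : ℕ, {x : M | ∃ y ∈ J, ∃ z : M, x = y + ((PowerSeries.X : PowerSeries ℂ) ^ n) • z}

/-!
If `hᵏ x = y + hᵏ⁺ⁿ z` with `y ∈ J`, then `hᵏ (x - hⁿ z) = y` lies in `J`, so saturation of `J`
gives `x - hⁿ z ∈ J`, i.e. `x ∈ J + hⁿ M`. Saturation of `J` means that `h` acts injectively on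
`M ⧸ J`, i.e. `IsSMulRegular (M ⧸ J) h`.
-/

section IdealAdicClosure

open scoped Pointwise

variable {R M : Type*} [CommRing R] [AddCommGroup M] [Module R M]

/-- The closure of a submodule `J` in the `I`-adic topology of the ambient module, encoded
algebraically as the intersection of the submodules `J + Iⁿ M`. -/
def idealAdicClosure (I : Ideal R) (J : Submodule R M) : Submodule R M :=
  ⨅ n : ℕ, J ⊔ I ^ n • ⊤

theorem mem_idealAdicClosure_span_singleton {a : R} {J : Submodule R M} {x : M} :
    x ∈ idealAdicClosure (Ideal.span {a}) J ↔ ∀ n : ℕ, x ∈ J ⊔ a ^ n • (⊤ : Submodule R M) := by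
  simp only [idealAdicClosure, Submodule.mem_iInf, Ideal.span_singleton_pow,
    Submodule.ideal_span_singleton_smul]

theorem smul_mem_sup_smul_iff {a : R} {J : Submodule R M} (ha : IsSMulRegular (M ⧸ J) a)
    (N : Submodule R M) {x : M} : a • x ∈ J ⊔ a • N ↔ x ∈ J ⊔ N := by
  constructor
  · intro hx
    obtain ⟨y, hy, _, ⟨z, hz, rfl⟩, hyz⟩ := Submodule.mem_sup.mp hx
    have hsub : a • (x - z) ∈ J := by
      rw [smul_sub, ← hyz]
      simpa using hy
    have hxz : x - z ∈ J := mem_of_isSMulRegular_quotient_of_smul_mem ha hsub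
    exact Submodule.mem_sup.mpr ⟨x - z, hxz, z, hz, sub_add_cancel x z⟩
  · intro hx
    obtain ⟨y, hy, z, hz, rfl⟩ := Submodule.mem_sup.mp hx
    rw [smul_add]
    exact Submodule.add_mem_sup (J.smul_mem a hy) (Submodule.smul_mem_pointwise_smul z a N hz)

theorem statement8_general {a : R} {J : Submodule R M} (ha : IsSMulRegular (M ⧸ J) a) (k : ℕ) :
    IsSMulRegular (M ⧸ idealAdicClosure (Ideal.span {a}) J) (a ^ k) := by
  refine (isSMulRegular_quotient_iff_mem_of_smul_mem _ _).mpr fun x hx ↦ ?_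
  rw [mem_idealAdicClosure_span_singleton] at hx ⊢
  intro n
  have hkn : a ^ k • x ∈ J ⊔ a ^ k • a ^ n • (⊤ : Submodule R M) := by
    simpa only [pow_add, mul_smul] using hx (k + n)
  exact (smul_mem_sup_smul_iff (ha.pow k) _).mp hkn

end IdealAdicClosure

theorem adicClosure_eq_idealAdicClosure {M : Type*} [AddCommGroup M] [Module (PowerSeries ℂ) M]
    (J : Submodule (PowerSeries ℂ) M) :
    adicClosure M J = idealAdicClosure (Ideal.span {PowerSeries.X}) J := by
  ext x
  simp only [adicClosure, Set.mem_iInter, Set.mem_ofPred_eq, SetLike.mem_coe,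
    mem_idealAdicClosure_span_singleton, Submodule.mem_sup, Submodule.mem_smul_pointwise_iff_exists,
    Submodule.mem_top, true_and, exists_exists_eq_and, eq_comm (a := x)]

/-- If a submodule `J` of a `ℂ[[h]]`-module `M` is `h`-saturated (`h·x ∈ J` implies
`x ∈ J`), then its `h`-adic closure `J̄ = ⋂ₙ (J + hⁿM)` is again `h`-saturated: for every
`x ∈ M` and `k ≥ 1`, `hᵏ·x ∈ J̄` implies `x ∈ J̄`. -/
theorem statement8 (M : Type*) [AddCommGroup M] [Module (PowerSeries ℂ) M]
    (J : Submodule (PowerSeries ℂ) M)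
    (hsat : ∀ x : M, (PowerSeries.X : PowerSeries ℂ) • x ∈ J → x ∈ J) :
    ∀ x : M, ∀ k : ℕ, 1 ≤ k →
      ((PowerSeries.X : PowerSeries ℂ) ^ k) • x ∈ adicClosure M J →
      x ∈ adicClosure M J := by
  rw [adicClosure_eq_idealAdicClosure]
  exact fun x k _ ↦ mem_of_isSMulRegular_quotient_of_smul_mem <|
    statement8_general ((isSMulRegular_quotient_iff_mem_of_smul_mem _ _).mpr hsat) k
end
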